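/- Easy model structure on a conical diagram category: Let M be a model category whose underlying category is locally presentable and which is cofibrantly generated, i.e. there are sets of morphisms I and J' of M such that the fibrations of M are exactly the morphisms having the right lifting property with respect to every member of J', and the trivial fibrations of M are exactly the morphisms having the right lifting property with respect to every member of I. Let J be a small category with an initial object e such that the only morphism of J with target e is the identity of e. Then the functor category J ⥤ M carries a model structure in which: a natural transformation σ : F ⟶ G is a weak equivalence if and only if its component σ_e at e is a weak equivalence in M; σ is a fibration if and only if σ_e is a fibration in M; and consequently σ is simultaneously a fibration and a weak equivalence if and only if σ_e is a trivial fibration in M. -/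

import Mathlib

/-!
Easy model structure on a conical diagram category: if `M` is a locally
presentable, cofibrantly generated model category and `J` is a small category
with an initial object `e` whose only incoming morphism is its identity, then
the functor category `J ⥤ M` carries a model structure whose weak equivalences
(resp. fibrations) are the natural transformations whose component at `e` is a
weak equivalence (resp. a fibration) in `M`; consequently the trivial
fibrations are the maps whose component at `e` is a trivial fibration in `M`.
-/

universe u₂ v₂
open CategoryTheory Limits

universe v u

namespace CoSegal

variable {C : Type u} [Category.{v} C]

/-- `f` is a retract of `g`, i.e. `f` is a retract of `g` as objects of the
arrow category of `C`. -/
def IsRetractOf {X Y Z W : C} (f : X ⟶ Y) (g : Z ⟶ W) : Prop :=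
  ∃ (i : Arrow.mk f ⟶ Arrow.mk g) (r : Arrow.mk g ⟶ Arrow.mk f),
    i ≫ r = 𝟙 (Arrow.mk f)

/-- a class of morphisms is stable under retracts if any retract of a morphism
of the class belongs to the class. -/
def StableUnderRetracts (P : MorphismProperty C) : Prop :=
  ∀ ⦃X Y Z W : C⦄ (f : X ⟶ Y) (g : Z ⟶ W), IsRetractOf f g → P g → P f

/-- A (closed) model structure on a category `C`, with class of weak
equivalences `W`, class of cofibrations `Cof` and class of fibrations `Fib`:
`W` satisfies two-out-of-three, the three classes are stable under retracts,
cofibrations have the left lifting property against trivial fibrations,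
trivial cofibrations have the left lifting property against fibrations, and
every morphism factors as a (trivial) cofibration followed by a (trivial)
fibration.  (A model category is a complete and cocomplete category equipped
with such a model structure.) -/
structure IsModelStructure (W Cof Fib : MorphismProperty C) : Prop where
  two_out_of_three : W.HasTwoOutOfThreeProperty
  weq_retract : StableUnderRetracts W
  cof_retract : StableUnderRetracts Cof
  fib_retract : StableUnderRetracts Fib
  lift_cof_trivFib : ∀ ⦃A B X Y : C⦄ (i : A ⟶ B) (p : X ⟶ Y),
    Cof i → Fib p → W p → HasLiftingProperty i p
  lift_trivCof_fib : ∀ ⦃A B X Y : C⦄ (i : A ⟶ B) (p : X ⟶ Y),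
    Cof i → W i → Fib p → HasLiftingProperty i p
  fac_cof_trivFib : MorphismProperty.HasFactorization Cof (Fib ⊓ W)
  fac_trivCof_fib : MorphismProperty.HasFactorization (Cof ⊓ W) Fib

end CoSegal
namespace CoSegal

open CategoryTheory Limits Opposite

/-- A category `J` is `κ`-filtered (for a cardinal `κ`) if every functor to `J`
from a small category with fewer than `κ` morphisms admits a cocone. -/
def IsCardinalFiltered (J : Type u₂) [Category.{v₂} J] (κ : Cardinal.{v}) : Prop :=
  ∀ A : Cat.{v, v}, Cardinal.mk (Arrow A) < κ → ∀ F : A ⥤ J, Nonempty (Cocone F)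

/-- An object `X` of a category `C` is `κ`-presentable if the functor
`Hom(X, -) : C ⥤ Type` preserves colimits indexed by `κ`-filtered small
categories. -/
def IsCardinalPresentable {C : Type u} [Category.{v} C] (X : C)
    (κ : Cardinal.{v}) : Prop :=
  ∀ J : Cat.{v, v}, IsCardinalFiltered J κ →
    PreservesColimitsOfShape J (coyoneda.obj (op X))

/-- A category `C` is locally presentable if it is cocomplete and accessible:
there is a regular cardinal `κ` and a small family of `κ`-presentable objects
such that every object of `C` is the colimit of a `κ`-filtered diagram whose
values are (isomorphic to) objects of the family. -/
def IsLocallyPresentable (C : Type u) [Category.{v} C] : Prop :=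
  HasColimits C ∧
    ∃ κ : Cardinal.{v}, κ.IsRegular ∧
      ∃ (ι : Type v) (G : ι → C),
        (∀ i, IsCardinalPresentable (G i) κ) ∧
        ∀ X : C, ∃ (J : Cat.{v, v}) (_ : IsCardinalFiltered J κ) (F : J ⥤ C)
          (c : Cocone F),
            (∀ j : J, ∃ i, Nonempty (F.obj j ≅ G i)) ∧
            Nonempty (IsColimit c) ∧ Nonempty (c.pt ≅ X)

end CoSegal

namespace CoSegal

open CategoryTheory Limits

/-- the class of morphisms having the right lifting property with respect to
every member of a family of morphisms. -/
def rlpAgainstFamily {C : Type u} [Category.{v} C] {ι : Type u₂}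
    (S : ι → Arrow C) : MorphismProperty C :=
  fun _ _ p => ∀ i, HasLiftingProperty (S i).hom p

end CoSegal

open CategoryTheory Limits

/-!
Because `e` is initial, the constant diagram functor is fully faithful and left adjoint to
evaluation at `e`, and evaluation preserves pushouts. More generally let `L ⊣ U` with `L` fully
faithful and `U` preserving pushouts. Given `σ : X ⟶ Y` and a factorization `U σ = i ≫ p`, push
`L i` out along the counit `L U X ⟶ X`. The functor `U` inverts the counit, so it sends the
resulting factorization of `σ` back to `i ≫ p`, up to isomorphism; and the first factor inherits
from `i` every lifting property against a morphism of the form `U q`, now against `q` itself.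
The model structure therefore transfers along `U` without a small object argument.
-/

namespace CoSegal

open MorphismProperty

section ModelStructureOfFactorizations

variable {C : Type*} [Category* C]

lemma stableUnderRetracts_iff (P : MorphismProperty C) :
    StableUnderRetracts P ↔ P.IsStableUnderRetracts where
  mp hP := ⟨fun r hg => hP _ _ ⟨r.i, r.r, r.retract⟩ hg⟩
  mpr _ := fun _ _ _ _ _ _ ⟨i, r, hir⟩ hg => P.of_retract ⟨i, r, hir⟩ hg

lemma hasFactorization_of_le_left {P P' Q : MorphismProperty C} (hfac : HasFactorization P Q)
    (h : P ≤ P') : HasFactorization P' Q where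
  nonempty_mapFactorizationData f :=
    (hfac.nonempty_mapFactorizationData f).map fun d =>
      ⟨d.Z, d.i, d.p, d.fac, h _ d.hi, d.hp⟩

lemma llp_inf_le_llp_of_hasFactorization (W Fib : MorphismProperty C)
    [W.HasTwoOutOfThreeProperty] [HasFactorization (Fib.llp ⊓ W) Fib] :
    (Fib ⊓ W).llp ⊓ W ≤ Fib.llp := by
  rintro A B f ⟨hf, hfW⟩
  let d := factorizationData (Fib.llp ⊓ W) Fib f
  have hpW : W d.p := W.of_precomp d.i d.p d.hi.2 (d.fac.symm ▸ hfW)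
  have : HasLiftingProperty f d.p := hf _ ⟨d.hp, hpW⟩
  exact of_retract (RetractArrow.ofLeftLiftingProperty d.fac) d.hi.1

theorem isModelStructure_of_hasFactorization (W Fib : MorphismProperty C)
    [W.HasTwoOutOfThreeProperty] [W.IsStableUnderRetracts] [Fib.IsStableUnderRetracts]
    [HasFactorization (Fib ⊓ W).llp (Fib ⊓ W)] [HasFactorization (Fib.llp ⊓ W) Fib] :
    IsModelStructure W (Fib ⊓ W).llp Fib where
  two_out_of_three := inferInstance
  weq_retract := (stableUnderRetracts_iff W).2 inferInstance
  cof_retract := (stableUnderRetracts_iff _).2 inferInstance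
  fib_retract := (stableUnderRetracts_iff Fib).2 inferInstance
  lift_cof_trivFib _ _ _ _ _ p hi hp hpW := hi p ⟨hp, hpW⟩
  lift_trivCof_fib _ _ _ _ i p hi hiW hp :=
    llp_inf_le_llp_of_hasFactorization W Fib i ⟨hi, hiW⟩ p hp
  fac_cof_trivFib := inferInstance
  fac_trivCof_fib :=
    hasFactorization_of_le_left ‹HasFactorization (Fib.llp ⊓ W) Fib›
      (inf_le_inf_right W (antitone_llp inf_le_left))

end ModelStructureOfFactorizations

section Transfer

variable {C D : Type*} [Category* C] [Category* D] {L : C ⥤ D} {U : D ⥤ C}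

section CounitPushout

variable (adj : L ⊣ U) {X Z : D} {E : C} {i : U.obj X ⟶ E} {a : X ⟶ Z} {k : L.obj E ⟶ Z}

lemma hasLiftingProperty_of_isPushout_counit
    (sq : IsPushout (adj.counit.app X) (L.map i) a k) {A B : D} (q : A ⟶ B)
    [HasLiftingProperty i (U.map q)] : HasLiftingProperty a q :=
  have : HasLiftingProperty (L.map i) q := (adj.hasLiftingProperty_iff i q).2 inferInstance
  sq.hasLiftingProperty q

lemma comp_homEquiv_eq_map_of_commSq_counit
    (sq : CommSq (adj.counit.app X) (L.map i) a k) : i ≫ adj.homEquiv E Z k = U.map a := by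
  rw [← adj.homEquiv_naturality_left, ← sq.w, adj.homEquiv_naturality_right,
    adj.homEquiv_unit, adj.right_triangle_components, Category.id_comp]

lemma isIso_homEquiv_of_isPushout_counit [L.Full] [L.Faithful]
    [PreservesColimitsOfShape WalkingSpan U]
    (sq : IsPushout (adj.counit.app X) (L.map i) a k) : IsIso (adj.homEquiv E Z k) := by
  have : IsIso (U.map k) := (sq.map U).isIso_inr_of_isIso
  rw [adj.homEquiv_unit]
  infer_instance

end CounitPushout

variable [L.Full] [L.Faithful] [HasPushouts D] [PreservesColimitsOfShape WalkingSpan U]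

lemma hasFactorization_inverseImage (adj : L ⊣ U) {P Q : MorphismProperty C}
    [P.RespectsIso] [Q.RespectsIso] [HasFactorization P Q] (hPQ : P ≤ Q.llp) :
    HasFactorization (P.inverseImage U ⊓ (Q.inverseImage U).llp) (Q.inverseImage U) where
  nonempty_mapFactorizationData {X Y} σ := by
    let d := factorizationData P Q (U.map σ)
    have w : adj.counit.app X ≫ σ = L.map d.i ≫ (adj.homEquiv d.Z Y).symm d.p := by
      rw [← adj.homEquiv_naturality_left_symm, d.fac, adj.homEquiv_counit,
        adj.counit_naturality]
    have sq := IsPushout.of_hasPushout (adj.counit.app X) (L.map d.i)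
    let a := pushout.inl (adj.counit.app X) (L.map d.i)
    let k := pushout.inr (adj.counit.app X) (L.map d.i)
    let b := pushout.desc σ _ w
    have : IsIso (adj.homEquiv _ _ k) := isIso_homEquiv_of_isPushout_counit adj sq
    have map_a : d.i ≫ adj.homEquiv _ _ k = U.map a :=
      comp_homEquiv_eq_map_of_commSq_counit adj sq.toCommSq
    have map_b : adj.homEquiv _ _ k ≫ U.map b = d.p := by
      rw [← adj.homEquiv_naturality_right, pushout.inr_desc, Equiv.apply_symm_apply]
    have ha : P (U.map a) := by
      rw [← map_a, P.cancel_right_of_respectsIso]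
      exact d.hi
    have hb : Q (U.map b) := by
      rw [← Q.cancel_left_of_respectsIso (adj.homEquiv _ _ k), map_b]
      exact d.hp
    have ha_llp : (Q.inverseImage U).llp a := fun _ _ q hq =>
      have := hPQ _ d.hi (U.map q) hq
      hasLiftingProperty_of_isPushout_counit adj sq q
    exact ⟨⟨_, a, b, pushout.inl_desc _ _ _, ⟨ha, ha_llp⟩, hb⟩⟩

theorem IsModelStructure.inverseImage {W Cof Fib : MorphismProperty C}
    (h : IsModelStructure W Cof Fib) (adj : L ⊣ U) :
    IsModelStructure (W.inverseImage U) ((Fib ⊓ W).inverseImage U).llp (Fib.inverseImage U) := by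
  have := h.two_out_of_three
  have := h.fac_cof_trivFib
  have := h.fac_trivCof_fib
  have := (stableUnderRetracts_iff W).1 h.weq_retract
  have := (stableUnderRetracts_iff Cof).1 h.cof_retract
  have := (stableUnderRetracts_iff Fib).1 h.fib_retract
  have cof_le : Cof ≤ (Fib ⊓ W).llp :=
    fun _ _ i hi _ _ p hp => h.lift_cof_trivFib i p hi hp.1 hp.2
  have trivCof_le : Cof ⊓ W ≤ Fib.llp :=
    fun _ _ i hi _ _ p hp => h.lift_trivCof_fib i p hi.1 hi.2 hp
  have : HasFactorization (Fib.inverseImage U ⊓ W.inverseImage U).llp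
      (Fib.inverseImage U ⊓ W.inverseImage U) :=
    hasFactorization_of_le_left (hasFactorization_inverseImage adj cof_le) inf_le_right
  have : HasFactorization ((Fib.inverseImage U).llp ⊓ W.inverseImage U) (Fib.inverseImage U) :=
    hasFactorization_of_le_left (hasFactorization_inverseImage adj trivCof_le)
      fun _ _ _ ⟨⟨_, hW⟩, hllp⟩ => ⟨hllp, hW⟩
  exact isModelStructure_of_hasFactorization (W.inverseImage U) (Fib.inverseImage U)

end Transfer

/-- The adjunction between constant diagrams and evaluation at an initial object `e`, expressing
that `F.obj e` is the limit of `F`. The unit and counit are given explicitly, so that the right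
adjoint is evaluation itself and not a chosen limit functor. -/
def constAdjunctionEvaluation (M : Type*) [Category* M] {J : Type*} [Category* J] {e : J}
    (he : IsInitial e) : Functor.const J ⊣ (evaluation J M).obj e where
  unit := { app X := 𝟙 X }
  counit :=
    { app F :=
        { app j := F.map (he.to j)
          naturality j k f := by simp [← F.map_comp] } }

end CoSegal

theorem easy_model_structure_on_diagrams_general
    {M : Type*} [Category* M] [HasPushouts M] {W Cof Fib : MorphismProperty M}
    (hmodel : CoSegal.IsModelStructure W Cof Fib)
    {J : Type*} [Category* J] {e : J} (he : IsInitial e) :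
    CoSegal.IsModelStructure
      (W.inverseImage ((evaluation J M).obj e))
      ((Fib ⊓ W).inverseImage ((evaluation J M).obj e)).llp
      (Fib.inverseImage ((evaluation J M).obj e)) :=
  have : IsConnected J := isConnected_of_isInitial J he
  hmodel.inverseImage (CoSegal.constAdjunctionEvaluation M he)

theorem easy_model_structure_on_diagrams
    {M : Type u} [Category.{v} M] [HasLimits M]
    (hpres : CoSegal.IsLocallyPresentable M)
    (W Cof Fib : MorphismProperty M)
    (hmodel : CoSegal.IsModelStructure W Cof Fib)
    {ιI ιJ : Type v} (I : ιI → Arrow M) (J' : ιJ → Arrow M)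
    (hFib : Fib = CoSegal.rlpAgainstFamily J')
    (hTrivFib : Fib ⊓ W = CoSegal.rlpAgainstFamily I)
    {J : Type v} [SmallCategory J] (e : J) (he : IsInitial e)
    (honly : ∀ (j : J) (g : j ⟶ e), ∃ h : j = e, g = eqToHom h) :
    ∃ Cof' : MorphismProperty (J ⥤ M),
      CoSegal.IsModelStructure
        (fun (F G : J ⥤ M) (σ : F ⟶ G) => W (σ.app e)) Cof'
        (fun (F G : J ⥤ M) (σ : F ⟶ G) => Fib (σ.app e)) ∧
      ∀ {F G : J ⥤ M} (σ : F ⟶ G),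
        (Fib (σ.app e) ∧ W (σ.app e)) ↔ (Fib ⊓ W) (σ.app e) := by
  have : HasColimits M := hpres.1
  exact ⟨_, easy_model_structure_on_diagrams_general hmodel he, fun _ => Iff.rfl⟩
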